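/- Let r and n be integers with 2 ≤ r and n ≥ r+1, and let G be a K_{r+1}-saturated simple graph on n vertices. Then the sum over all vertices v of G of d(v)², where d(v) denotes the degree of v, is at least (n-1)²(r-1) + (r-1)²(n-r+1). -/

import Mathlib

open SimpleGraph

/-- A graph `G` is `K_r`-saturated if it contains no `r`-clique, but adding any edge
between distinct non-adjacent vertices creates an `r`-clique. -/
def IsKSaturated {V : Type*} (r : ℕ) (G : SimpleGraph V) : Prop :=
  G.CliqueFree r ∧ ∀ u v : V, u ≠ v → ¬ G.Adj u v →
    ¬ (G ⊔ SimpleGraph.fromEdgeSet {s(u, v)}).CliqueFree r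

/-!
Put `k = r - 1`. In a `K_{k+2}`-saturated graph every non-edge `e` has both its ends joined to all
of some `k`-clique `Q e`. The pairs formed by `e` and the complement of `e ∪ Q e` satisfy the
hypothesis of Bollobás's set-pair inequality, so there are at most `C(n - k, 2)` non-edges. If
`v ∈ Q e`, then `e` and `Q e \ {v}` lie in the neighbourhood of `v`, and the same argument inside
that neighbourhood shows that `v` belongs to at most `C(d(v) - k + 1, 2)` of the cliques `Q e`.
Summed over `v`, this second bound says that `k` times the number of non-edges is at most
`∑ v, C(d(v) - k + 1, 2)`. Since the number of non-edges determines `∑ v, d(v)`, this is a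
lower bound on `∑ v, d(v)²` that does not increase with the number of non-edges, so the first bound
can be inserted into it.
-/

open Finset

section SetPairs

variable {ι α : Type*} {I : Finset ι} {A B : ι → Finset α}

/-- The hypothesis of Bollobás's set-pair inequality for the pairs `(A i, B i)` with `i ∈ I`. -/
structure IsSetPairSystem (I : Finset ι) (A B : ι → Finset α) : Prop where
  disjoint : ∀ i ∈ I, Disjoint (A i) (B i)
  not_disjoint : (I : Set ι).Pairwise fun i j ↦ ¬Disjoint (A i) (B j)

lemma IsSetPairSystem.eq_singleton {i : ι} (h : IsSetPairSystem I A B) (hi : i ∈ I) (hB : B i = ∅) :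
    I = {i} := by
  refine eq_singleton_iff_unique_mem.2 ⟨hi, fun j hj ↦ ?_⟩
  by_contra hji
  exact h.not_disjoint hj hi hji (hB ▸ disjoint_empty_right (A j))

lemma add_one_mul_inv_choose (a b : ℕ) :
    (b + 1 : ℚ) * ((a + b).choose a : ℚ)⁻¹ = (a + b + 1) * ((a + (b + 1)).choose a : ℚ)⁻¹ := by
  have recursion : ((a + b).choose a : ℚ) * (a + b + 1) = (a + (b + 1)).choose a * (b + 1) := by
    have h := Nat.choose_mul_succ_eq (a + b) a
    rw [add_assoc a b 1, Nat.add_sub_cancel_left] at h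
    exact_mod_cast h
  have hb : ((a + b).choose a : ℚ) ≠ 0 := mod_cast (Nat.choose_pos (by lia)).ne'
  have hb' : ((a + (b + 1)).choose a : ℚ) ≠ 0 := mod_cast (Nat.choose_pos (by lia)).ne'
  field_simp
  linear_combination -recursion

lemma sum_sdiff_inv_choose_card_erase [DecidableEq α] {A B X : Finset α} (hA : A ⊆ X) (hB : B ⊆ X)
    (hAB : Disjoint A B) (hne : B.Nonempty) :
    ∑ x ∈ X \ A, ((#A + #(B.erase x)).choose #A : ℚ)⁻¹ =
      #X * ((#A + #B).choose #A : ℚ)⁻¹ := by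
  have hBX : B ⊆ X \ A := subset_sdiff.2 ⟨hB, hAB.symm⟩
  have sum_on : ∑ x ∈ B, ((#A + #(B.erase x)).choose #A : ℚ)⁻¹ =
      (#A + #B) * ((#A + #B).choose #A : ℚ)⁻¹ := by
    obtain ⟨b, hb⟩ := Nat.exists_eq_succ_of_ne_zero hne.card_ne_zero
    rw [sum_congr rfl fun x hx ↦ by rw [card_erase_of_mem hx], sum_const, nsmul_eq_mul, hb]
    push_cast
    simpa only [add_assoc] using add_one_mul_inv_choose #A b
  have sum_off : ∑ x ∈ (X \ A) \ B, ((#A + #(B.erase x)).choose #A : ℚ)⁻¹ =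
      #((X \ A) \ B) * ((#A + #B).choose #A : ℚ)⁻¹ := by
    rw [sum_congr rfl fun x hx ↦ by rw [erase_eq_of_notMem (mem_sdiff.1 hx).2], sum_const,
      nsmul_eq_mul]
  have card_X : (#((X \ A) \ B) + #B + #A : ℚ) = #X := by
    exact_mod_cast (congrArg (· + #A) (card_sdiff_add_card_eq_card hBX)).trans
      (card_sdiff_add_card_eq_card hA)
  rw [← sum_sdiff hBX, sum_on, sum_off, ← card_X]
  ring

namespace IsSetPairSystem

lemma erase [DecidableEq α] (h : IsSetPairSystem I A B) (x : α) :
    IsSetPairSystem {i ∈ I | x ∉ A i} A fun i ↦ (B i).erase x where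
  disjoint i hi := (h.disjoint i (mem_filter.1 hi).1).mono_right (erase_subset x (B i))
  not_disjoint i hi j hj hij := by
    obtain ⟨hiI, hxi⟩ := mem_filter.1 hi
    rw [← disjoint_erase_comm, erase_eq_of_notMem hxi]
    exact h.not_disjoint hiI (mem_filter.1 hj).1 hij

-- The inductive step averages the inequality for the systems `h.erase x` over all `x ∈ X`.
lemma sum_inv_choose_le_one_of_subset {X : Finset α} (h : IsSetPairSystem I A B)
    (hA : ∀ i ∈ I, A i ⊆ X) (hB : ∀ i ∈ I, B i ⊆ X) :
    ∑ i ∈ I, ((#(A i) + #(B i)).choose #(A i) : ℚ)⁻¹ ≤ 1 := by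
  classical
  induction X using Finset.strongInduction generalizing I B with
  | H X ih =>
    by_cases hempty : ∃ i ∈ I, B i = ∅
    · obtain ⟨i, hi, hBi⟩ := hempty
      simp [h.eq_singleton hi hBi, hBi]
    simp only [not_exists, not_and, ← nonempty_iff_ne_empty, ← ne_eq] at hempty
    obtain rfl | ⟨i₀, hi₀⟩ := I.eq_empty_or_nonempty
    · simp
    have hX : (0 : ℚ) < #X := mod_cast ((hempty i₀ hi₀).mono (hB i₀ hi₀)).card_pos
    have sum_erase_le (x : α) (hx : x ∈ X) :
        ∑ i ∈ I with x ∉ A i, ((#(A i) + #((B i).erase x)).choose #(A i) : ℚ)⁻¹ ≤ 1 := by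
      refine ih _ (erase_ssubset hx) (h.erase x) (fun i hi ↦ ?_) fun i hi ↦ ?_
      · exact subset_erase.2 ⟨hA i (mem_filter.1 hi).1, (mem_filter.1 hi).2⟩
      · exact erase_subset_erase x (hB i (mem_filter.1 hi).1)
    refine le_of_mul_le_mul_left ?_ hX
    calc #X * ∑ i ∈ I, ((#(A i) + #(B i)).choose #(A i) : ℚ)⁻¹
        = ∑ i ∈ I, ∑ x ∈ X \ A i, ((#(A i) + #((B i).erase x)).choose #(A i) : ℚ)⁻¹ := by
          rw [mul_sum]
          exact sum_congr rfl fun i hi ↦ (sum_sdiff_inv_choose_card_erase (hA i hi) (hB i hi)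
            (h.disjoint i hi) (hempty i hi)).symm
      _ = ∑ x ∈ X, ∑ i ∈ I with x ∉ A i, ((#(A i) + #((B i).erase x)).choose #(A i) : ℚ)⁻¹ :=
          sum_comm' (by simp only [mem_sdiff, mem_filter]; tauto)
      _ ≤ ∑ x ∈ X, 1 := sum_le_sum sum_erase_le
      _ = #X * 1 := by simp

theorem sum_inv_choose_le_one (h : IsSetPairSystem I A B) :
    ∑ i ∈ I, ((#(A i) + #(B i)).choose #(A i) : ℚ)⁻¹ ≤ 1 := by
  classical
  exact h.sum_inv_choose_le_one_of_subset (X := I.biUnion A ∪ I.biUnion B)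
    (fun _ hi ↦ (subset_biUnion_of_mem A hi).trans subset_union_left)
    (fun _ hi ↦ (subset_biUnion_of_mem B hi).trans subset_union_right)

theorem card_le_choose {a b : ℕ} (h : IsSetPairSystem I A B) (hA : ∀ i ∈ I, #(A i) = a)
    (hB : ∀ i ∈ I, #(B i) = b) : #I ≤ (a + b).choose a := by
  have hsum := h.sum_inv_choose_le_one
  rw [sum_congr rfl fun i hi ↦ by rw [hA i hi, hB i hi], sum_const, nsmul_eq_mul,
    ← div_eq_mul_inv, div_le_one (mod_cast Nat.choose_pos (by lia))] at hsum
  exact_mod_cast hsum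

end IsSetPairSystem

end SetPairs

section LinkingCliques

variable {V : Type*} {G : SimpleGraph V} {k : ℕ} {e : Sym2 V} {Q : Finset V}

/-- `Q` is a `k`-clique all of whose vertices are adjacent to both ends of `e`. When `e` is a
non-edge, adding it to `G` turns `Q` and the ends of `e` into a `(k + 2)`-clique. -/
structure IsLinkingClique (G : SimpleGraph V) (k : ℕ) (e : Sym2 V) (Q : Finset V) : Prop where
  isNClique : G.IsNClique k Q
  adj : ∀ q ∈ Q, ∀ x ∈ e, G.Adj q x

/-- Every non-edge of `G` has a linking `k`-clique: adding any missing edge creates a *new*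
`(k + 2)`-clique. `G` itself may contain `(k + 2)`-cliques. -/
def HasLinkingCliques (G : SimpleGraph V) (k : ℕ) : Prop :=
  ∀ e ∈ Gᶜ.edgeSet, ∃ Q, IsLinkingClique G k e Q

theorem IsKSaturated.hasLinkingCliques (h : IsKSaturated (k + 2) G) : HasLinkingCliques G k := by
  classical
  rintro ⟨u, v⟩ huv
  obtain ⟨hne, hnadj⟩ : u ≠ v ∧ ¬G.Adj u v := huv
  obtain ⟨s, hs⟩ : ∃ s, (G ⊔ edge u v).IsNClique (k + 2) s := not_forall_not.1 (h.2 u v hne hnadj)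
  have hs' : (G ⊔ edge v u).IsNClique (k + 2) s := edge_comm u v ▸ hs
  have hu : u ∈ s := h.1.mem_of_sup_edge_isNClique hs
  have hv : v ∈ s := h.1.mem_of_sup_edge_isNClique hs'
  have clique_u := hs.erase_of_sup_edge_of_mem hu
  have clique_v := hs'.erase_of_sup_edge_of_mem hv
  refine ⟨(s.erase u).erase v, clique_u.erase_of_mem (mem_erase.2 ⟨hne.symm, hv⟩), ?_⟩
  intro q hq x hx
  simp only [mem_erase] at hq
  obtain ⟨hqv, hqu, hqs⟩ := hq
  obtain rfl | rfl := Sym2.mem_iff.1 hx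
  · exact clique_v.isClique (mem_erase.2 ⟨hqv, hqs⟩) (mem_erase.2 ⟨hne, hu⟩) hqu
  · exact clique_u.isClique (mem_erase.2 ⟨hqu, hqs⟩) (mem_erase.2 ⟨hne.symm, hv⟩) hqv

variable [DecidableEq V]

namespace IsLinkingClique

lemma disjoint (h : IsLinkingClique G k e Q) : Disjoint e.toFinset Q :=
  disjoint_left.2 fun x hxe hxQ ↦ G.irrefl (h.adj x hxQ x (Sym2.mem_toFinset.1 hxe))

lemma erase {v : V} (h : IsLinkingClique G (k + 1) e Q) (hv : v ∈ Q) :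
    IsLinkingClique G k e (Q.erase v) where
  isNClique := h.isNClique.erase_of_mem hv
  adj q hq := h.adj q (mem_of_mem_erase hq)

lemma eq_of_toFinset_subset {f : Sym2 V} (h : IsLinkingClique G k e Q) (hf : f ∈ Gᶜ.edgeSet)
    (hsub : f.toFinset ⊆ e.toFinset ∪ Q) : f = e := by
  induction f with
  | h x y =>
    obtain ⟨hne, hnadj⟩ : x ≠ y ∧ ¬G.Adj x y := hf
    simp only [subset_iff, mem_union, Sym2.mem_toFinset, Sym2.mem_iff, forall_eq_or_imp,
      forall_eq] at hsub
    obtain ⟨hx | hx, hy | hy⟩ := hsub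
    · exact ((Sym2.mem_and_mem_iff hne).1 ⟨hx, hy⟩).symm
    · exact absurd (h.adj y hy x hx).symm hnadj
    · exact absurd (h.adj x hx y hy) hnadj
    · exact absurd (h.isNClique.isClique hx hy hne) hnadj

end IsLinkingClique

theorem card_nonedges_le_choose_of_isLinkingClique {E : Finset (Sym2 V)} {Q : Sym2 V → Finset V}
    {S : Finset V} (hE : ∀ e ∈ E, e ∈ Gᶜ.edgeSet) (hQ : ∀ e ∈ E, IsLinkingClique G k e (Q e))
    (hES : ∀ e ∈ E, e.toFinset ⊆ S) (hQS : ∀ e ∈ E, Q e ⊆ S) : #E ≤ (#S - k).choose 2 := by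
  obtain rfl | ⟨e₀, he₀⟩ := E.eq_empty_or_nonempty
  · simp
  have card_ends (e : Sym2 V) (he : e ∈ E) : #e.toFinset = 2 :=
    Sym2.card_toFinset_of_not_isDiag e (Gᶜ.not_isDiag_of_mem_edgeSet (hE e he))
  have card_compl (e : Sym2 V) (he : e ∈ E) : #(S \ (e.toFinset ∪ Q e)) + (2 + k) = #S := by
    rw [← card_sdiff_add_card_eq_card (union_subset (hES e he) (hQS e he)),
      card_union_of_disjoint (hQ e he).disjoint, card_ends e he, (hQ e he).isNClique.card_eq]
  have setPairs : IsSetPairSystem E Sym2.toFinset fun e ↦ S \ (e.toFinset ∪ Q e) :=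
    { disjoint := fun e _ ↦ disjoint_sdiff.mono_left subset_union_left
      not_disjoint := fun e he f hf hne hdisj ↦ hne <|
        (hQ f hf).eq_of_toFinset_subset (hE e he) <|
          (disjoint_sdiff_iff_le (hES e he) (union_subset (hES f hf) (hQS f hf))).1 hdisj }
  have hle := setPairs.card_le_choose card_ends fun e he ↦ Nat.eq_sub_of_add_eq (card_compl e he)
  have := card_compl e₀ he₀
  rwa [show 2 + (#S - (2 + k)) = #S - k by lia] at hle

end LinkingCliques

lemma two_mul_choose_two_sub_le (m k : ℕ) :
    2 * ((m - k).choose 2 : ℤ) ≤ (m - k) * (m - k - 1) := by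
  obtain hkm | hmk := le_total k m
  · refine le_of_eq ?_
    qify
    rw [Nat.cast_choose_two, Nat.cast_sub hkm]
    ring
  · rw [Nat.sub_eq_zero_of_le hmk]
    simp only [Nat.choose_zero_succ, Nat.cast_zero, mul_zero]
    nlinarith [(Nat.cast_le (α := ℤ)).2 hmk]

section Counting

variable {V : Type*} [Fintype V] [DecidableEq V] {G : SimpleGraph V} [DecidableRel G.Adj] {k : ℕ}

variable (G) in
lemma sum_degree_eq_sub_two_mul_card_edgeFinset_compl :
    ∑ v, (G.degree v : ℤ) = Fintype.card V * (Fintype.card V - 1) - 2 * #Gᶜ.edgeFinset := by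
  have degree_eq (v : V) : (G.degree v : ℤ) = Fintype.card V - 1 - Gᶜ.degree v := by
    have := G.degree_compl v
    have := G.degree_lt_card_verts v
    lia
  have sum_compl : ∑ v, (Gᶜ.degree v : ℤ) = 2 * #Gᶜ.edgeFinset := mod_cast
    Gᶜ.sum_degrees_eq_twice_card_edges
  simp only [degree_eq, sum_sub_distrib, sum_compl, sum_const, card_univ, nsmul_eq_mul]
  ring

namespace HasLinkingCliques

theorem card_edgeFinset_compl_le (h : HasLinkingCliques G k) :
    #Gᶜ.edgeFinset ≤ (Fintype.card V - k).choose 2 := by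
  choose! Q hQ using h
  exact card_nonedges_le_choose_of_isLinkingClique (fun _ ↦ mem_edgeFinset.1)
    (fun e he ↦ hQ e (mem_edgeFinset.1 he)) (fun _ _ ↦ subset_univ _) (fun _ _ ↦ subset_univ _)

theorem card_edgeFinset_compl_mul_le (h : HasLinkingCliques G (k + 1)) :
    #Gᶜ.edgeFinset * (k + 1) ≤ ∑ v, (G.degree v - k).choose 2 := by
  choose! Q hQ using h
  replace hQ (e : Sym2 V) (he : e ∈ Gᶜ.edgeFinset) := hQ e (mem_edgeFinset.1 he)
  have card_le (v : V) : #{e ∈ Gᶜ.edgeFinset | v ∈ Q e} ≤ (G.degree v - k).choose 2 := by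
    refine card_nonedges_le_choose_of_isLinkingClique (G := G) (Q := fun e ↦ (Q e).erase v)
      (S := G.neighborFinset v) ?_ ?_ ?_ ?_ <;> intro e he <;>
      obtain ⟨he, hv⟩ := mem_filter.1 he
    · exact mem_edgeFinset.1 he
    · exact (hQ e he).erase hv
    · exact fun x hx ↦ (G.mem_neighborFinset v x).2 ((hQ e he).adj v hv x (Sym2.mem_toFinset.1 hx))
    · intro q hq
      obtain ⟨hqv, hq⟩ := mem_erase.1 hq
      exact (G.mem_neighborFinset v q).2 ((hQ e he).isNClique.isClique hv hq hqv.symm)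
  calc #Gᶜ.edgeFinset * (k + 1) = ∑ e ∈ Gᶜ.edgeFinset, #(Q e) :=
        (sum_const_nat fun e he ↦ (hQ e he).isNClique.card_eq).symm
    _ = ∑ v, #{e ∈ Gᶜ.edgeFinset | v ∈ Q e} := by
        simpa [bipartiteAbove, bipartiteBelow] using
          sum_card_bipartiteAbove_eq_sum_card_bipartiteBelow (s := Gᶜ.edgeFinset) (t := univ)
            fun e v ↦ v ∈ Q e
    _ ≤ ∑ v, (G.degree v - k).choose 2 := sum_le_sum fun v _ ↦ card_le v

lemma two_mul_card_edgeFinset_compl_mul_le (h : HasLinkingCliques G (k + 1)) :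
    2 * (#Gᶜ.edgeFinset * (k + 1) : ℤ) ≤
      ∑ v, (G.degree v : ℤ) ^ 2 - (2 * k + 1) * ∑ v, (G.degree v : ℤ) +
        Fintype.card V * (k * (k + 1)) :=
  calc 2 * (#Gᶜ.edgeFinset * (k + 1) : ℤ) ≤ 2 * ∑ v, ((G.degree v - k).choose 2 : ℤ) := by
        gcongr; exact_mod_cast h.card_edgeFinset_compl_mul_le
    _ ≤ ∑ v, ((G.degree v : ℤ) - k) * (G.degree v - k - 1) := by
        rw [mul_sum]
        exact sum_le_sum fun v _ ↦ two_mul_choose_two_sub_le (G.degree v) k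
    _ = ∑ v, ((G.degree v : ℤ) ^ 2 - (2 * k + 1) * G.degree v + k * (k + 1)) :=
        sum_congr rfl fun v _ ↦ by ring
    _ = _ := by
        simp only [sum_add_distrib, sum_sub_distrib, mul_sum, sum_const, card_univ, nsmul_eq_mul]

end HasLinkingCliques

end Counting

theorem stmt_0_general {V : Type*} [Fintype V] {k : ℕ} {G : SimpleGraph V}
    [DecidableRel G.Adj] (h : HasLinkingCliques G k) :
    ((Fintype.card V : ℤ) - 1) ^ 2 * k + (k : ℤ) ^ 2 * (Fintype.card V - k) ≤
      ∑ v, (G.degree v : ℤ) ^ 2 := by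
  classical
  obtain _ | k := k
  · simpa using sum_nonneg fun v _ ↦ sq_nonneg (G.degree v : ℤ)
  have m_le : 2 * (#Gᶜ.edgeFinset : ℤ) ≤
      (Fintype.card V - (k + 1 : ℕ)) * (Fintype.card V - (k + 1 : ℕ) - 1) :=
    le_trans (by gcongr; exact h.card_edgeFinset_compl_le) (two_mul_choose_two_sub_le _ _)
  have m_mul_le := h.two_mul_card_edgeFinset_compl_mul_le
  rw [sum_degree_eq_sub_two_mul_card_edgeFinset_compl] at m_mul_le
  push_cast at m_le ⊢
  linarith [mul_le_mul_of_nonneg_left m_le (Nat.cast_nonneg (α := ℤ) k)]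

theorem stmt_0 {V : Type*} [Fintype V] [DecidableEq V] (r n : ℕ) (hr : 2 ≤ r)
    (hn : r + 1 ≤ n) (hcard : Fintype.card V = n)
    (G : SimpleGraph V) [DecidableRel G.Adj] (hsat : IsKSaturated (r + 1) G) :
    ((n : ℤ) - 1) ^ 2 * ((r : ℤ) - 1) + ((r : ℤ) - 1) ^ 2 * ((n : ℤ) - (r : ℤ) + 1)
      ≤ ∑ v : V, (G.degree v : ℤ) ^ 2 := by
  obtain ⟨k, rfl⟩ := Nat.exists_eq_add_of_le' (one_le_two.trans hr)
  simpa [hcard, ← sub_sub] using stmt_0_general hsat.hasLinkingCliques
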